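/- arXiv:1110.4622 — 4 statements merged into one kernel-verified Lean document; each statement's English description precedes it below -/
import Mathlib

section
/- The Neumann kernel is a probability kernel on the interval: for every u ∈ [-1,1], ∫_{-1}^{1} J^neum(u,v) dv = 1. -/
open MeasureTheory Set

noncomputable section

/-- The Neumann (reflected) Kac kernel:
`J^neum(u,v) = j(v-u) + j(2-v-u) + j(-2-v-u)`. -/
def Jneum (j : ℝ → ℝ) (u v : ℝ) : ℝ := j (v - u) + j (2 - v - u) + j (-2 - v - u)

/-!
The three terms of the kernel are the translate `x ↦ j (x - u)` on `[-1, 1]` and its restrictions to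
the adjacent intervals `[1, 3]` and `[-3, -1]`, folded back by reflection at `1` and `-1`.
Integrating over `[-1, 1]` therefore recovers the integral of `j` over `[-3 - u, 3 - u]`, an
interval containing `[-2, 2]`, and hence the support of `j`, when `|u| ≤ 1`.
-/

section IntervalIntegral

variable {E : Type*} [NormedAddCommGroup E] [NormedSpace ℝ E]

theorem integral_add_endpoint_reflections {f : ℝ → E} {a b : ℝ}
    (hf : IntervalIntegrable f volume (2 * a - b) (2 * b - a)) :
    ∫ v in a..b, (f v + f (2 * b - v) + f (2 * a - v)) = ∫ x in (2 * a - b)..(2 * b - a), f x := by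
  have ha : a ∈ uIcc (2 * a - b) (2 * b - a) := by grind [mem_uIcc]
  have hb : b ∈ uIcc (2 * a - b) (2 * b - a) := by grind [mem_uIcc]
  have hf_left : IntervalIntegrable f volume (2 * a - b) a :=
    hf.mono_set (uIcc_subset_uIcc left_mem_uIcc ha)
  have hf_mid : IntervalIntegrable f volume a b := hf.mono_set (uIcc_subset_uIcc ha hb)
  have hf_right : IntervalIntegrable f volume b (2 * b - a) :=
    hf.mono_set (uIcc_subset_uIcc hb right_mem_uIcc)
  have hf_reflect_right : IntervalIntegrable (fun v ↦ f (2 * b - v)) volume a b := by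
    simpa [two_mul] using (hf_right.comp_sub_left (2 * b)).symm
  have hf_reflect_left : IntervalIntegrable (fun v ↦ f (2 * a - v)) volume a b := by
    simpa [two_mul] using (hf_left.comp_sub_left (2 * a)).symm
  calc ∫ v in a..b, (f v + f (2 * b - v) + f (2 * a - v))
      = (∫ v in a..b, f v) + (∫ v in a..b, f (2 * b - v)) + ∫ v in a..b, f (2 * a - v) := by
        rw [intervalIntegral.integral_add (hf_mid.add hf_reflect_right) hf_reflect_left,
          intervalIntegral.integral_add hf_mid hf_reflect_right]
    _ = (∫ x in a..b, f x) + (∫ x in b..(2 * b - a), f x) + ∫ x in (2 * a - b)..a, f x := by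
        simp only [intervalIntegral.integral_comp_sub_left, two_mul, add_sub_cancel_right]
    _ = ∫ x in (2 * a - b)..(2 * b - a), f x := by
        rw [intervalIntegral.integral_add_adjacent_intervals hf_mid hf_right, add_comm,
          intervalIntegral.integral_add_adjacent_intervals hf_left (hf_mid.trans hf_right)]

theorem intervalIntegral_eq_integral_of_support_subset_Icc {μ : Measure ℝ} [NullSingletonClass μ]
    {f : ℝ → E} {a b : ℝ} (hf : Function.support f ⊆ Icc a b) :
    ∫ x in a..b, f x ∂μ = ∫ x, f x ∂μ := by
  rcases le_or_gt a b with hab | hba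
  · rw [intervalIntegral.integral_of_le hab, ← integral_Icc_eq_integral_Ioc]
    exact setIntegral_eq_integral_of_forall_compl_eq_zero fun x hx ↦
      Function.notMem_support.mp fun hx_support ↦ hx (hf hx_support)
  · have hf_zero : f = 0 := by simpa [Icc_eq_empty hba.not_ge] using hf
    simp [hf_zero]

end IntervalIntegral

theorem integral_Jneum {j : ℝ → ℝ} {u : ℝ} (hj : IntervalIntegrable j volume (-3 - u) (3 - u)) :
    ∫ v in (-1 : ℝ)..1, Jneum j u v = ∫ x in (-3 - u)..(3 - u), j x := by
  have hj_translate :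
      IntervalIntegrable (fun x ↦ j (x - u)) volume (2 * (-1) - 1) (2 * 1 - (-1)) := by
    convert hj.comp_sub_right u using 1 <;> ring
  calc ∫ v in (-1 : ℝ)..1, Jneum j u v
      = ∫ v in (-1 : ℝ)..1, (j (v - u) + j (2 * 1 - v - u) + j (2 * (-1) - v - u)) := by
        norm_num [Jneum]
    _ = ∫ x in (2 * (-1) - 1)..(2 * 1 - (-1)), j (x - u) :=
        integral_add_endpoint_reflections hj_translate
    _ = ∫ x in (-3 - u)..(3 - u), j x := by
        rw [intervalIntegral.integral_comp_sub_right]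
        norm_num

theorem jneum_prob_kernel_general (j : ℝ → ℝ) (hj_supp : ∀ x : ℝ, 2 < |x| → j x = 0)
    (hj_int : ∫ x, j x = 1) :
    ∀ u ∈ Icc (-1 : ℝ) 1, ∫ v in (-1 : ℝ)..1, Jneum j u v = 1 := by
  rintro u ⟨hu_lower, hu_upper⟩
  have hj : Integrable j := .of_integral_ne_zero (by simp [hj_int])
  have hj_support : Function.support j ⊆ Icc (-3 - u) (3 - u) := by
    intro x hx
    have hx_abs : |x| ≤ 2 := not_lt.mp fun h ↦ hx (hj_supp x h)
    obtain ⟨hx_lower, hx_upper⟩ := abs_le.mp hx_abs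
    constructor <;> linarith
  rw [integral_Jneum hj.intervalIntegrable,
    intervalIntegral_eq_integral_of_support_subset_Icc hj_support, hj_int]

/-- the Neumann kernel is a probability kernel on `[-1,1]`:
for every `u ∈ [-1,1]`, `∫_{-1}^{1} J^neum(u,v) dv = 1`. -/
theorem jneum_prob_kernel
    (j : ℝ → ℝ)
    (hj_smooth : ContDiff ℝ 1 j)
    (hj_nonneg : ∀ u, 0 ≤ j u)
    (hj_even : ∀ u, j (-u) = j u)
    (hj_supp : ∀ u : ℝ, 1 < |u| → j u = 0)
    (hj_int : (∫ u : ℝ, j u) = 1) :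
    ∀ u ∈ Icc (-1:ℝ) 1, (∫ v in (-1:ℝ)..1, Jneum j u v) = 1 :=
  jneum_prob_kernel_general j (fun x hx ↦ hj_supp x (one_lt_two.trans hx)) hj_int

end
end

section
/- For every continuously differentiable function G : [-1,1] → ℝ and every u ∈ (-1,1), the function u ↦ ∫_{-1}^{1} J^neum(u,v) G(v) dv is differentiable at u and |d/du ∫_{-1}^{1} J^neum(u,v) G(v) dv| ≤ ∫_{-1}^{1} J^neum(u,v) |G'(v)| dv. -/
open MeasureTheory Set

noncomputable section

/-!
Differentiating the Neumann kernel in its first variable gives, up to sign, the derivative in the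
second variable of the Dirichlet kernel, in which the two reflected terms change sign. The Dirichlet
kernel vanishes at `v = ±1`: there one reflected term cancels the direct one and the other lies off
the support of `j`. Hence integration by parts has no boundary terms and gives
`d/du ∫ J^neum(u,v) G(v) dv = ∫ J^dir(u,v) G'(v) dv`, and the bound follows from `|J^dir| ≤ J^neum`.
-/

/-- The Dirichlet counterpart of `Jneum`: on `[-1,1]` with absorbing rather than reflecting
endpoints, the reflected images of `j` enter with a minus sign. -/
def Jdir (j : ℝ → ℝ) (u v : ℝ) : ℝ := j (v - u) - j (2 - v - u) - j (-2 - v - u)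

section Kernels

variable {j : ℝ → ℝ}

theorem continuous_uncurry_Jneum (hj : Continuous j) : Continuous (Function.uncurry (Jneum j)) := by
  unfold Jneum Function.uncurry
  fun_prop

theorem continuous_Jneum (hj : Continuous j) (u : ℝ) : Continuous (Jneum j u) :=
  (continuous_uncurry_Jneum hj).uncurry_left u

theorem continuous_Jdir (hj : Continuous j) (u : ℝ) : Continuous (Jdir j u) := by
  unfold Jdir
  fun_prop

theorem hasDerivAt_Jneum_left (hj : Differentiable ℝ j) (u v : ℝ) :
    HasDerivAt (fun w => Jneum j w v) (-Jneum (deriv j) u v) u := by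
  have shifted (c : ℝ) : HasDerivAt (fun w => j (c - w)) (-deriv j (c - u)) u :=
    (hj (c - u)).hasDerivAt.comp_const_sub c u
  refine (((shifted v).add (shifted (2 - v))).add
    (shifted (-2 - v))).congr_deriv ?_
  simp only [Jneum]
  ring

theorem hasDerivAt_Jdir_right (hj : Differentiable ℝ j) (u v : ℝ) :
    HasDerivAt (Jdir j u) (Jneum (deriv j) u v) v := by
  have direct : HasDerivAt (fun x => j (x - u)) (deriv j (v - u)) v :=
    (hj (v - u)).hasDerivAt.comp_sub_const v u
  have reflected (c : ℝ) : HasDerivAt (fun x => j (c - x - u)) (-deriv j (c - v - u)) v :=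
    ((hj (c - v - u)).hasDerivAt.comp_sub_const (c - v) u).comp_const_sub c v
  refine ((direct.sub (reflected 2)).sub (reflected (-2))).congr_deriv ?_
  simp only [Jneum]
  ring

theorem Jdir_one (j : ℝ → ℝ) (u : ℝ) : Jdir j u 1 = -j (-3 - u) := by
  unfold Jdir
  ring_nf

theorem Jdir_neg_one (j : ℝ → ℝ) (u : ℝ) : Jdir j u (-1) = -j (3 - u) := by
  unfold Jdir
  ring_nf

theorem abs_Jdir_le_Jneum (hj : ∀ x, 0 ≤ j x) (u v : ℝ) : |Jdir j u v| ≤ Jneum j u v := by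
  unfold Jdir Jneum
  rw [abs_le]
  constructor <;> linarith [hj (v - u), hj (2 - v - u), hj (-2 - v - u)]

end Kernels

section Integrals

variable {E : Type*} [NormedAddCommGroup E] [NormedSpace ℝ E] {G G' : ℝ → E}

theorem hasDerivAt_integral_smul_of_continuous_deriv {a b : ℝ} {k k' : ℝ → ℝ → ℝ}
    (hk : ∀ w, Continuous (k w)) (hk' : Continuous (Function.uncurry k'))
    (hkk' : ∀ w v, HasDerivAt (fun x => k x v) (k' w v) w)
    (hG : IntervalIntegrable G volume a b) (u : ℝ) :
    HasDerivAt (fun w => ∫ v in a..b, k w v • G v) (∫ v in a..b, k' u v • G v) u := by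
  have smul_integrable {f : ℝ → ℝ} (hf : Continuous f) :
      IntervalIntegrable (fun v => f v • G v) volume a b :=
    hG.continuousOn_smul hf.continuousOn
  obtain ⟨C, hC⟩ := ((isCompact_closedBall u 1).prod
    (isCompact_uIcc (a := a) (b := b))).exists_bound_of_continuousOn hk'.continuousOn
  refine (intervalIntegral.hasDerivAt_integral_of_dominated_loc_of_deriv_le
    (F' := fun w v => k' w v • G v) (bound := fun v => C * ‖G v‖)
    (Metric.closedBall_mem_nhds u one_pos)
    (.of_forall fun w => (smul_integrable (hk w)).aestronglyMeasurable_restrict_uIoc)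
    (smul_integrable (hk u))
    (smul_integrable (hk'.uncurry_left u)).aestronglyMeasurable_restrict_uIoc
    (.of_forall fun v hv w hw => ?_) (hG.norm.const_mul C)
    (.of_forall fun v _ w _ => (hkk' w v).smul_const (G v))).2
  rw [norm_smul]
  gcongr
  exact hC (w, v) ⟨hw, uIoc_subset_uIcc hv⟩

variable {j : ℝ → ℝ} {u : ℝ}

theorem integral_Jneum_deriv_smul [CompleteSpace E] (hj : ContDiff ℝ 1 j)
    (hj_left : j (-3 - u) = 0) (hj_right : j (3 - u) = 0)
    (hG : ContinuousOn G (Icc (-1) 1)) (hGG' : ∀ v ∈ Ioo (-1) 1, HasDerivAt G (G' v) v)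
    (hG' : IntervalIntegrable G' volume (-1) 1) :
    ∫ v in (-1 : ℝ)..1, Jneum (deriv j) u v • G v = -∫ v in (-1 : ℝ)..1, Jdir j u v • G' v := by
  have by_parts := intervalIntegral.integral_smul_deriv_eq_deriv_smul_of_hasDerivAt
    (a := -1) (b := 1) (continuous_Jdir hj.continuous u).continuousOn
    (by rwa [uIcc_of_le (by norm_num)])
    (fun v _ => hasDerivAt_Jdir_right (hj.differentiable one_ne_zero) u v)
    (by simpa using hGG')
    ((continuous_Jneum (hj.continuous_deriv le_rfl) u).intervalIntegrable _ _) hG'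
  rw [by_parts, Jdir_one, Jdir_neg_one, hj_left, hj_right]
  simp

theorem hasDerivAt_integral_Jneum_smul [CompleteSpace E] (hj : ContDiff ℝ 1 j)
    (hj_left : j (-3 - u) = 0) (hj_right : j (3 - u) = 0)
    (hG : ContinuousOn G (Icc (-1) 1)) (hGG' : ∀ v ∈ Ioo (-1) 1, HasDerivAt G (G' v) v)
    (hG' : IntervalIntegrable G' volume (-1) 1) :
    HasDerivAt (fun w => ∫ v in (-1 : ℝ)..1, Jneum j w v • G v)
      (∫ v in (-1 : ℝ)..1, Jdir j u v • G' v) u := by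
  have under_integral := hasDerivAt_integral_smul_of_continuous_deriv
    (k' := fun w v => -Jneum (deriv j) w v)
    (continuous_Jneum hj.continuous) (continuous_uncurry_Jneum (hj.continuous_deriv le_rfl)).neg
    (hasDerivAt_Jneum_left (hj.differentiable one_ne_zero))
    (hG.intervalIntegrable_of_Icc (by norm_num)) u
  refine under_integral.congr_deriv ?_
  simp only [neg_smul, intervalIntegral.integral_neg]
  rw [integral_Jneum_deriv_smul hj hj_left hj_right hG hGG' hG', neg_neg]

theorem norm_integral_Jdir_smul_le {a b : ℝ} (hab : a ≤ b) (hj : Continuous j)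
    (hj_nonneg : ∀ x, 0 ≤ j x) (hG : IntervalIntegrable G volume a b) (u : ℝ) :
    ‖∫ v in a..b, Jdir j u v • G v‖ ≤ ∫ v in a..b, Jneum j u v * ‖G v‖ := by
  refine intervalIntegral.norm_integral_le_of_norm_le hab (.of_forall fun v _ => ?_)
    (hG.norm.continuousOn_mul (continuous_Jneum hj u).continuousOn)
  rw [norm_smul, Real.norm_eq_abs]
  gcongr
  exact abs_Jdir_le_Jneum hj_nonneg u v

theorem jneum_conv_deriv_bound_general [CompleteSpace E] (hj : ContDiff ℝ 1 j)
    (hj_nonneg : ∀ x, 0 ≤ j x) (hj_left : j (-3 - u) = 0) (hj_right : j (3 - u) = 0)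
    (hG : ContinuousOn G (Icc (-1) 1)) (hGG' : ∀ v ∈ Ioo (-1) 1, HasDerivAt G (G' v) v)
    (hG' : IntervalIntegrable G' volume (-1) 1) :
    DifferentiableAt ℝ (fun w => ∫ v in (-1 : ℝ)..1, Jneum j w v • G v) u ∧
      ‖deriv (fun w => ∫ v in (-1 : ℝ)..1, Jneum j w v • G v) u‖ ≤
        ∫ v in (-1 : ℝ)..1, Jneum j u v * ‖G' v‖ := by
  have conv_deriv := hasDerivAt_integral_Jneum_smul hj hj_left hj_right hG hGG' hG'
  refine ⟨conv_deriv.differentiableAt, ?_⟩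
  rw [conv_deriv.deriv]
  exact norm_integral_Jdir_smul_le (by norm_num) hj.continuous hj_nonneg hG' u

end Integrals

/-- for every `C¹` function `G` and every `u ∈ (-1,1)`, the map
`u ↦ ∫_{-1}^{1} J^neum(u,v) G(v) dv` is differentiable at `u` and its derivative
is bounded in absolute value by `∫_{-1}^{1} J^neum(u,v) |G'(v)| dv`. -/
theorem jneum_conv_deriv_bound
    (j : ℝ → ℝ)
    (hj_smooth : ContDiff ℝ 1 j)
    (hj_nonneg : ∀ u, 0 ≤ j u)
    (hj_even : ∀ u, j (-u) = j u)
    (hj_supp : ∀ u : ℝ, 1 < |u| → j u = 0)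
    (hj_int : (∫ u : ℝ, j u) = 1)
    (G : ℝ → ℝ) (hG : ContDiff ℝ 1 G) :
    ∀ u ∈ Ioo (-1:ℝ) 1,
      DifferentiableAt ℝ (fun w => ∫ v in (-1:ℝ)..1, Jneum j w v * G v) u ∧
      |deriv (fun w => ∫ v in (-1:ℝ)..1, Jneum j w v * G v) u| ≤
        ∫ v in (-1:ℝ)..1, Jneum j u v * |deriv G v| := by
  intro u hu
  exact jneum_conv_deriv_bound_general hj_smooth hj_nonneg
    (hj_supp _ (lt_abs.mpr (.inr (by linarith [hu.1]))))
    (hj_supp _ (lt_abs.mpr (.inl (by linarith [hu.2]))))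
    hG.continuous.continuousOn (fun v _ => (hG.differentiable one_ne_zero v).hasDerivAt)
    ((hG.continuous_deriv le_rfl).intervalIntegrable _ _)

end
end

section
/- Let θ : [-1,1] → (0,1) be a C^1 function with θ(-1) = ρ_- and θ(1) = ρ_+. Then there exists a constant C_0 > 0, depending only on θ, β and j, such that for every integer N ≥ 1, every a > 0 and every f : S_N → ℝ, ∫ f(η) (L_{β,N} f)(η) dν_N^θ(η) ≤ -(1 - a) D_{0,N}(f, ν_N^θ) + (C_0 / (a N)) ‖f‖²_{L²(ν_N^θ)}. -/
open MeasureTheory Set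

noncomputable section

/-- The sites of the finite lattice `Λ_N = {-N, …, N}`. -/
abbrev Site (N : ℕ) := {x : ℤ // x ∈ Finset.Icc (-(N:ℤ)) (N:ℤ)}

/-- The configuration space `S_N = {0,1}^{Λ_N}`. -/
abbrev Conf (N : ℕ) := Site N → Bool

/-- Occupation number of a site, as a real number. -/
def val (b : Bool) : ℝ := if b then 1 else 0

/-- The value of the configuration `η` at the integer site `x` (false outside `Λ_N`). -/
def getC (N : ℕ) (η : Conf N) (x : ℤ) : Bool :=
  if h : x ∈ Finset.Icc (-(N:ℤ)) (N:ℤ) then η ⟨x, h⟩ else false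

/-- The configuration obtained from `η` by exchanging the values at `x` and `y`. -/
def exchC (N : ℕ) (η : Conf N) (x y : ℤ) : Conf N :=
  fun z => if (z:ℤ) = x then getC N η y else if (z:ℤ) = y then getC N η x else η z

/-- The Hamiltonian `H_N(η) = -(1/2) Σ_{x,y ∈ Λ_N} N⁻¹ J^neum(x/N, y/N) η(x) η(y)`. -/
def hamC (j : ℝ → ℝ) (N : ℕ) (η : Conf N) : ℝ :=
  -(1/2) * ∑ x : Site N, ∑ y : Site N,
    (N:ℝ)⁻¹ * Jneum j (((x:ℤ):ℝ)/(N:ℝ)) (((y:ℤ):ℝ)/(N:ℝ)) * val (η x) * val (η y)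

/-- The exchange rate `C_N^β(x,y;η) = exp(-(β/2)[H_N(η^{x,y}) - H_N(η)])`. -/
def rateC (β : ℝ) (j : ℝ → ℝ) (N : ℕ) (x y : ℤ) (η : Conf N) : ℝ :=
  Real.exp (-(β/2) * (hamC j N (exchC N η x y) - hamC j N η))

/-- The bulk (Kawasaki) generator
`(L_{β,N} f)(η) = Σ_{x,y ∈ Λ_N, |x-y|=1} C_N^β(x,y;η) [f(η^{x,y}) - f(η)]`. -/
def Lkaw (β : ℝ) (j : ℝ → ℝ) (N : ℕ) (f : Conf N → ℝ) (η : Conf N) : ℝ :=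
  ∑ x : Site N, ∑ y : Site N,
    if |(x:ℤ) - (y:ℤ)| = 1 then
      rateC β j N (x:ℤ) (y:ℤ) η * (f (exchC N η (x:ℤ) (y:ℤ)) - f η)
    else 0

/-- The Bernoulli product measure on `S_N` with slowly varying profile `θ`. -/
def bernProf (N : ℕ) (θ : ℝ → ℝ) (η : Conf N) : ℝ :=
  ∏ x : Site N, (if η x then θ (((x:ℤ):ℝ)/(N:ℝ)) else 1 - θ (((x:ℤ):ℝ)/(N:ℝ)))

/-- The Dirichlet form `D_{0,N}(h,ν) = Σ_{x=-N}^{N-1} ∫ (h(η^{x,x+1}) - h(η))² dν`. -/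
def D0 (N : ℕ) (h : Conf N → ℝ) (ν : Conf N → ℝ) : ℝ :=
  ∑ x ∈ Finset.Icc (-(N:ℤ)) ((N:ℤ) - 1), ∑ η : Conf N,
    ν η * (h (exchC N η x (x+1)) - h η)^2

/-!
For a bond with exchange map `σ`, write `∇f = f ∘ σ - f`. The substitution `η ↦ σ η` gives, for any
weight `ν` and rate `c`, the exact identity
`2 ∑ ν c f ∇f = -∑ ν (∇f)² + ∑ (2 ν c - ν - ν ∘ σ) f ∇f`.
Exchanging neighbouring sites moves particles by `1/N` only, so it changes the energy by `O(1/N)`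
because the kernel is Lipschitz, and `c - 1 = O(1/N)`. Likewise `ν ∘ σ - ν = O(1/N) ν` because the
profile is Lipschitz and bounded away from `0` and `1`. Hence the last sum is `O(1/N) ∑ ν |f ∇f|`,
which Young's inequality splits into `a ∑ ν (∇f)²` and `O(1/(a N²)) ∑ ν f²`; there are `2N` bonds.
-/

open scoped NNReal

section Involution

variable {Ω : Type*} [Fintype Ω] {σ : Ω → Ω}

lemma two_mul_sum_mul_sub_comp_involutive (hσ : σ.Involutive) (ν c f : Ω → ℝ) :
    2 * ∑ η, ν η * (f η * (c η * (f (σ η) - f η))) =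
      -∑ η, ν η * (f (σ η) - f η) ^ 2 +
        ∑ η, (2 * ν η * c η - ν η - ν (σ η)) * (f η * (f (σ η) - f η)) := by
  have substitution : ∑ η, ν (σ η) * (f η * (f (σ η) - f η)) =
      ∑ η, ν η * (f (σ η) * (f η - f (σ η))) := by
    rw [← Equiv.sum_comp hσ.toPerm fun η => ν η * (f (σ η) * (f η - f (σ η)))]
    simp only [Function.Involutive.coe_toPerm, hσ _]
  calc 2 * ∑ η, ν η * (f η * (c η * (f (σ η) - f η)))
      = -∑ η, ν η * (f (σ η) - f η) ^ 2 +
          ∑ η, (2 * ν η * c η - ν η - ν (σ η)) * (f η * (f (σ η) - f η)) +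
          (∑ η, ν (σ η) * (f η * (f (σ η) - f η)) -
            ∑ η, ν η * (f (σ η) * (f η - f (σ η)))) := by
        simp only [Finset.mul_sum, ← Finset.sum_neg_distrib, ← Finset.sum_add_distrib,
          ← Finset.sum_sub_distrib]
        exact Finset.sum_congr rfl fun η _ => by ring
    _ = _ := by rw [substitution, sub_self, add_zero]

lemma two_mul_sum_mul_sub_comp_involutive_le (hσ : σ.Involutive) {ν c : Ω → ℝ}
    (hν : ∀ η, 0 ≤ ν η) {κ : ℝ} (hκ : ∀ η, |2 * ν η * c η - ν η - ν (σ η)| ≤ κ * ν η)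
    {a : ℝ} (ha : 0 < a) (f : Ω → ℝ) :
    2 * ∑ η, ν η * (f η * (c η * (f (σ η) - f η))) ≤
      -(1 - a) * ∑ η, ν η * (f (σ η) - f η) ^ 2 + κ ^ 2 / (4 * a) * ∑ η, ν η * f η ^ 2 := by
  have young (p q : ℝ) : κ * (|p| * |q|) ≤ a * q ^ 2 + κ ^ 2 / (4 * a) * p ^ 2 := by
    have := two_mul_le_add_mul_sq (a := |q|) (b := κ / 2 * |p|) ha
    rw [mul_pow, sq_abs, sq_abs] at this
    calc κ * (|p| * |q|) = 2 * |q| * (κ / 2 * |p|) := by ring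
      _ ≤ a * q ^ 2 + a⁻¹ * ((κ / 2) ^ 2 * p ^ 2) := this
      _ = a * q ^ 2 + κ ^ 2 / (4 * a) * p ^ 2 := by ring
  have defect (η : Ω) : (2 * ν η * c η - ν η - ν (σ η)) * (f η * (f (σ η) - f η)) ≤
      a * (ν η * (f (σ η) - f η) ^ 2) + κ ^ 2 / (4 * a) * (ν η * f η ^ 2) :=
    calc (2 * ν η * c η - ν η - ν (σ η)) * (f η * (f (σ η) - f η))
        ≤ |2 * ν η * c η - ν η - ν (σ η)| * (|f η| * |f (σ η) - f η|) := by
          rw [← abs_mul, ← abs_mul]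
          exact le_abs_self _
      _ ≤ κ * ν η * (|f η| * |f (σ η) - f η|) := by gcongr; exact hκ η
      _ = ν η * (κ * (|f η| * |f (σ η) - f η|)) := by ring
      _ ≤ ν η * (a * (f (σ η) - f η) ^ 2 + κ ^ 2 / (4 * a) * f η ^ 2) :=
          mul_le_mul_of_nonneg_left (young _ _) (hν η)
      _ = _ := by ring
  have total := Finset.sum_le_sum fun η (_ : η ∈ Finset.univ) => defect η
  rw [Finset.sum_add_distrib, ← Finset.mul_sum, ← Finset.mul_sum] at total
  rw [two_mul_sum_mul_sub_comp_involutive hσ]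
  linarith

end Involution

section Permutation

variable {ι : Type*} [Fintype ι]

lemma abs_quadraticForm_comp_perm_sub_le (s : Equiv.Perm ι) (A : ι → ι → ℝ) {v : ι → ℝ}
    (hv : ∀ x, |v x| ≤ 1) :
    |∑ x, ∑ y, A x y * v (s x) * v (s y) - ∑ x, ∑ y, A x y * v x * v y| ≤
      ∑ x, ∑ y, |A (s.symm x) (s.symm y) - A x y| := by
  have reindex : ∑ x, ∑ y, A x y * v (s x) * v (s y) =
      ∑ x, ∑ y, A (s.symm x) (s.symm y) * v x * v y := by
    rw [← Equiv.sum_comp s fun x => ∑ y, A (s.symm x) (s.symm y) * v x * v y]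
    refine Finset.sum_congr rfl fun x _ => ?_
    rw [← Equiv.sum_comp s fun y => A (s.symm (s x)) (s.symm y) * v (s x) * v y]
    simp only [Equiv.symm_apply_apply]
  have term_le (x y : ι) : |A (s.symm x) (s.symm y) * v x * v y - A x y * v x * v y| ≤
      |A (s.symm x) (s.symm y) - A x y| := by
    rw [← sub_mul, ← sub_mul, abs_mul, abs_mul, mul_assoc]
    exact mul_le_of_le_one_right (abs_nonneg _) (mul_le_one₀ (hv x) (abs_nonneg _) (hv y))
  rw [reindex]
  simp only [← Finset.sum_sub_distrib]
  refine (Finset.abs_sum_le_sum_abs _ _).trans (Finset.sum_le_sum fun x _ => ?_)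
  exact (Finset.abs_sum_le_sum_abs _ _).trans (Finset.sum_le_sum fun y _ => term_le x y)

variable [DecidableEq ι]

lemma sum_abs_comp_swap_sub (φ : ι → ℝ) (x y : ι) :
    ∑ z, |φ (Equiv.swap x y z) - φ z| = 2 * |φ x - φ y| := by
  rcases eq_or_ne x y with rfl | hxy
  · simp
  rw [← Finset.sum_subset (Finset.subset_univ {x, y}), Finset.sum_pair hxy,
    Equiv.swap_apply_left, Equiv.swap_apply_right, abs_sub_comm, two_mul]
  intro z _ hz
  simp only [Finset.mem_insert, Finset.mem_singleton, not_or] at hz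
  rw [Equiv.swap_apply_of_ne_of_ne hz.1 hz.2, sub_self, abs_zero]

lemma abs_prod_comp_swap_sub_le {α : Type*} {w : ι → α → ℝ} (hw : ∀ z b, 0 ≤ w z b) {x y : ι}
    (hxy : x ≠ y) {η : ι → α} {κ : ℝ}
    (hκ : |w x (η y) * w y (η x) - w x (η x) * w y (η y)| ≤ κ * (w x (η x) * w y (η y))) :
    |∏ z, w z (η (Equiv.swap x y z)) - ∏ z, w z (η z)| ≤ κ * ∏ z, w z (η z) := by
  have split (ζ : ι → α) : ∏ z, w z (ζ z) =
      w x (ζ x) * w y (ζ y) * ∏ z ∈ ({x, y} : Finset ι)ᶜ, w z (ζ z) := by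
    rw [← Finset.prod_pair (f := fun z => w z (ζ z)) hxy, Finset.prod_mul_prod_compl]
  have off_pair : ∏ z ∈ ({x, y} : Finset ι)ᶜ, w z (η (Equiv.swap x y z)) =
      ∏ z ∈ ({x, y} : Finset ι)ᶜ, w z (η z) := by
    refine Finset.prod_congr rfl fun z hz => ?_
    simp only [Finset.mem_compl, Finset.mem_insert, Finset.mem_singleton, not_or] at hz
    rw [Equiv.swap_apply_of_ne_of_ne hz.1 hz.2]
  have off_pair_nonneg : 0 ≤ ∏ z ∈ ({x, y} : Finset ι)ᶜ, w z (η z) :=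
    Finset.prod_nonneg fun z _ => hw z (η z)
  rw [split (fun z => η (Equiv.swap x y z)), split η, off_pair, Equiv.swap_apply_left,
    Equiv.swap_apply_right, ← sub_mul, abs_mul, abs_of_nonneg off_pair_nonneg, ← mul_assoc]
  exact mul_le_mul_of_nonneg_right hκ off_pair_nonneg

end Permutation

lemma abs_exp_sub_one_le_mul_exp_abs (t : ℝ) : |Real.exp t - 1| ≤ |t| * Real.exp |t| := by
  have := Complex.norm_exp_sub_sum_le_norm_mul_exp (t : ℂ) 1
  simp only [Finset.sum_range_one, pow_zero, Nat.factorial_zero, Nat.cast_one, div_one, pow_one,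
    Complex.norm_real, Real.norm_eq_abs] at this
  rwa [← Complex.ofReal_exp, ← Complex.ofReal_one, ← Complex.ofReal_sub, Complex.norm_real,
    Real.norm_eq_abs] at this

lemma exists_mapsTo_Icc_of_mapsTo_Ioo {X : Type*} [TopologicalSpace X] {s : Set X}
    (hs : IsCompact s) {f : X → ℝ} (hf : ContinuousOn f s) {a b : ℝ}
    (hmaps : MapsTo f s (Ioo a b)) :
    ∃ δ > 0, MapsTo f s (Icc (a + δ) (b - δ)) := by
  obtain ⟨δ, hδ, hle⟩ := hs.exists_forall_le' (f := fun x => min (f x - a) (b - f x)) (a := 0)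
    ((hf.sub continuousOn_const).inf (continuousOn_const.sub hf))
    fun x hx => lt_min (sub_pos.2 (hmaps hx).1) (sub_pos.2 (hmaps hx).2)
  refine ⟨δ, hδ, fun x hx => ?_⟩
  obtain ⟨hlow, hupp⟩ := le_min_iff.1 (hle x hx)
  constructor <;> linarith

lemma sum_Icc_sum_Icc_abs_sub_eq_one {M : Type*} [AddCommMonoid M] (a b : ℤ) {g : ℤ → ℤ → M}
    (hg : ∀ x y, g x y = g y x) :
    (∑ x ∈ Finset.Icc a b, ∑ y ∈ Finset.Icc a b, if |x - y| = 1 then g x y else 0) =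
      2 • ∑ x ∈ Finset.Icc a (b - 1), g x (x + 1) := by
  have right_neighbours :
      (∑ x ∈ Finset.Icc a b, ∑ y ∈ Finset.Icc a b, if y = x + 1 then g x y else 0) =
        ∑ x ∈ Finset.Icc a (b - 1), g x (x + 1) := by
    simp only [Finset.sum_ite_eq']
    rw [← Finset.sum_filter]
    refine Finset.sum_congr ?_ fun _ _ => rfl
    ext x
    simp only [Finset.mem_filter, Finset.mem_Icc]
    omega
  have split (x y : ℤ) : (if |x - y| = 1 then g x y else 0) =
      (if y = x + 1 then g x y else 0) + (if x = y + 1 then g y x else 0) := by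
    rw [← hg x y]
    rcases abs_cases (x - y) with h | h <;> split_ifs <;> first | omega | simp
  simp only [split, Finset.sum_add_distrib]
  rw [Finset.sum_comm (f := fun x y => if x = y + 1 then g y x else 0), right_neighbours, two_nsmul]

section Exchange

variable {N : ℕ}

lemma exchC_comm (η : Conf N) (x y : ℤ) : exchC N η x y = exchC N η y x := by
  funext z
  simp only [exchC]
  split_ifs with hx hy <;> simp_all

lemma exchC_eq_comp_swap (η : Conf N) (x y : Site N) : exchC N η x y = η ∘ Equiv.swap x y := by
  funext z
  simp only [exchC, getC, Function.comp, Equiv.swap_apply_def, Subtype.ext_iff, x.2, y.2, dif_pos]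
  split_ifs <;> rfl

lemma exchC_involutive (x y : Site N) :
    Function.Involutive fun η : Conf N => exchC N η x y := by
  intro η
  funext z
  simp only [exchC_eq_comp_swap, Function.comp, Equiv.swap_apply_self]

lemma sum_mul_Lkaw (β : ℝ) (j : ℝ → ℝ) (ν f : Conf N → ℝ) :
    ∑ η, ν η * (f η * Lkaw β j N f η) =
      ∑ x ∈ Finset.Icc (-(N : ℤ)) ((N : ℤ) - 1),
        2 * ∑ η, ν η * (f η * (rateC β j N x (x + 1) η * (f (exchC N η x (x + 1)) - f η))) := by
  let g (x y : ℤ) : ℝ := ∑ η, ν η * (f η * (rateC β j N x y η * (f (exchC N η x y) - f η)))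
  have g_comm (x y : ℤ) : g x y = g y x := by
    simp only [g, rateC, exchC_comm _ x y]
  have sum_sites : ∑ η, ν η * (f η * Lkaw β j N f η) =
      ∑ x : Site N, ∑ y : Site N, if |(x : ℤ) - y| = 1 then g x y else 0 := by
    simp only [Lkaw, Finset.mul_sum]
    rw [Finset.sum_comm]
    refine Finset.sum_congr rfl fun x _ => ?_
    rw [Finset.sum_comm]
    refine Finset.sum_congr rfl fun y _ => ?_
    split_ifs
    · rfl
    · simp only [mul_zero, Finset.sum_const_zero]
  have sum_bonds := sum_Icc_sum_Icc_abs_sub_eq_one (-(N : ℤ)) N g_comm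
  simp only [← Finset.sum_coe_sort (Finset.Icc (-(N : ℤ)) N), two_nsmul, ← two_mul] at sum_bonds
  rw [sum_sites, sum_bonds, Finset.mul_sum]

/-- The macroscopic position `x / N ∈ [-1, 1]` of a site; it is `0` for `N = 0`. -/
def macroPos (x : Site N) : ℝ := ((x : ℤ) : ℝ) / (N : ℝ)

lemma macroPos_mem_Icc (x : Site N) : macroPos x ∈ Icc (-1 : ℝ) 1 := by
  obtain ⟨hlow, hupp⟩ := Finset.mem_Icc.1 x.2
  rw [mem_Icc, ← abs_le, macroPos, abs_div, Nat.abs_cast]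
  refine div_le_one_of_le₀ ?_ N.cast_nonneg
  exact_mod_cast abs_le.2 ⟨hlow, hupp⟩

lemma abs_macroPos_sub_le_two (x y : Site N) : |macroPos x - macroPos y| ≤ 2 := by
  obtain ⟨hx, hx'⟩ := macroPos_mem_Icc x
  obtain ⟨hy, hy'⟩ := macroPos_mem_Icc y
  rw [abs_le]
  constructor <;> linarith

lemma abs_macroPos_sub_of_eq_add_one {x y : Site N} (h : (y : ℤ) = x + 1) :
    |macroPos x - macroPos y| = 1 / N := by
  have hcast : ((y : ℤ) : ℝ) = (x : ℤ) + 1 := by exact_mod_cast h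
  rw [macroPos, macroPos, ← sub_div, hcast, sub_add_cancel_left, abs_div, abs_neg, abs_one,
    Nat.abs_cast]

lemma card_site (N : ℕ) : Fintype.card (Site N) = 2 * N + 1 := by
  rw [Fintype.card_coe, Int.card_Icc]
  omega

end Exchange

section Rate

variable {N : ℕ} {j : ℝ → ℝ} {L : ℝ≥0}

-- For `u, v ∈ [-1, 1]` the arguments of `j` in `Jneum j u v` range over `[-4, 4]`.
lemma abs_Jneum_sub_le (hj : LipschitzOnWith L j (Icc (-4) 4)) {u v u' v' : ℝ}
    (hu : u ∈ Icc (-1 : ℝ) 1) (hv : v ∈ Icc (-1 : ℝ) 1)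
    (hu' : u' ∈ Icc (-1 : ℝ) 1) (hv' : v' ∈ Icc (-1 : ℝ) 1) :
    |Jneum j u' v' - Jneum j u v| ≤ 3 * L * (|u' - u| + |v' - v|) := by
  have lip {p q : ℝ} (hp : p ∈ Icc (-4 : ℝ) 4) (hq : q ∈ Icc (-4 : ℝ) 4)
      (hpq : |p - q| ≤ |u' - u| + |v' - v|) : |j p - j q| ≤ L * (|u' - u| + |v' - v|) :=
    (hj.dist_le_mul p hp q hq).trans (mul_le_mul_of_nonneg_left hpq L.2)
  simp only [mem_Icc] at hu hv hu' hv'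
  have direct : |j (v' - u') - j (v - u)| ≤ L * (|u' - u| + |v' - v|) := by
    refine lip (by constructor <;> linarith) (by constructor <;> linarith) ?_
    rw [sub_sub_sub_comm, add_comm]
    exact abs_sub _ _
  have reflected {r : ℝ} (hr : |r| ≤ 2) :
      |j (r - v' - u') - j (r - v - u)| ≤ L * (|u' - u| + |v' - v|) := by
    obtain ⟨hr, hr'⟩ := abs_le.1 hr
    refine lip (by constructor <;> linarith) (by constructor <;> linarith) ?_
    rw [show r - v' - u' - (r - v - u) = -((u' - u) + (v' - v)) by ring, abs_neg]
    exact abs_add_le _ _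
  calc |Jneum j u' v' - Jneum j u v|
      = |j (v' - u') - j (v - u) + (j (2 - v' - u') - j (2 - v - u)) +
          (j (-2 - v' - u') - j (-2 - v - u))| := by unfold Jneum; ring_nf
    _ ≤ |j (v' - u') - j (v - u)| + |j (2 - v' - u') - j (2 - v - u)| +
          |j (-2 - v' - u') - j (-2 - v - u)| := abs_add_three _ _ _
    _ ≤ _ := by linarith [reflected (r := 2) (by norm_num), reflected (r := -2) (by norm_num)]

lemma sum_abs_Jneum_swap_sub_le (hj : LipschitzOnWith L j (Icc (-4) 4)) (x y : Site N) :
    ∑ p, ∑ q, |Jneum j (macroPos (Equiv.swap x y p)) (macroPos (Equiv.swap x y q)) -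
        Jneum j (macroPos p) (macroPos q)| ≤
      12 * L * (2 * N + 1) * |macroPos x - macroPos y| := by
  have displacement := sum_abs_comp_swap_sub macroPos x y
  calc _ ≤ ∑ p : Site N, ∑ q : Site N, 3 * L * (|macroPos (Equiv.swap x y p) - macroPos p| +
            |macroPos (Equiv.swap x y q) - macroPos q|) :=
        Finset.sum_le_sum fun p _ => Finset.sum_le_sum fun q _ =>
          abs_Jneum_sub_le hj (macroPos_mem_Icc _) (macroPos_mem_Icc _) (macroPos_mem_Icc _)
            (macroPos_mem_Icc _)
    _ = _ := by
        simp only [← Finset.mul_sum, Finset.sum_add_distrib, Finset.sum_const, displacement,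
          Finset.card_univ, nsmul_eq_mul, card_site]
        push_cast
        ring

lemma abs_hamC_exchC_sub_le (hj : LipschitzOnWith L j (Icc (-4) 4)) (η : Conf N) (x y : Site N) :
    |hamC j N (exchC N η x y) - hamC j N η| ≤ 18 * L * |macroPos x - macroPos y| := by
  have val_le (z : Site N) : |val (η z)| ≤ 1 := by cases η z <;> simp [val]
  have energy := abs_quadraticForm_comp_perm_sub_le (Equiv.swap x y)
    (fun p q => (N : ℝ)⁻¹ * Jneum j (macroPos p) (macroPos q)) val_le
  simp only [Equiv.symm_swap, ← mul_sub, abs_mul, ← Finset.mul_sum, abs_inv, Nat.abs_cast]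
    at energy
  have density : (N : ℝ)⁻¹ * (2 * N + 1) ≤ 3 := by
    rcases N.eq_zero_or_pos with rfl | hN
    · simp
    have hN' : (1 : ℝ) ≤ N := by exact_mod_cast hN
    rw [inv_mul_le_iff₀ (by positivity)]
    linarith
  rw [exchC_eq_comp_swap]
  calc |hamC j N (η ∘ Equiv.swap x y) - hamC j N η|
      = 1 / 2 * |∑ p, ∑ q, (N : ℝ)⁻¹ * Jneum j (macroPos p) (macroPos q) *
            val (η (Equiv.swap x y p)) * val (η (Equiv.swap x y q)) -
          ∑ p, ∑ q, (N : ℝ)⁻¹ * Jneum j (macroPos p) (macroPos q) * val (η p) * val (η q)| := by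
        rw [hamC, hamC, ← mul_sub, abs_mul, abs_neg, abs_of_pos one_half_pos]
        rfl
    _ ≤ 1 / 2 * ((N : ℝ)⁻¹ * (12 * L * (2 * N + 1) * |macroPos x - macroPos y|)) := by
        gcongr
        refine energy.trans ?_
        gcongr
        exact sum_abs_Jneum_swap_sub_le hj x y
    _ = 6 * L * |macroPos x - macroPos y| * ((N : ℝ)⁻¹ * (2 * N + 1)) := by ring
    _ ≤ 6 * L * |macroPos x - macroPos y| * 3 := by gcongr
    _ = _ := by ring

lemma abs_rateC_sub_one_le (hj : LipschitzOnWith L j (Icc (-4) 4)) (β : ℝ) (η : Conf N)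
    (x y : Site N) :
    |rateC β j N x y η - 1| ≤
      9 * |β| * L * Real.exp (18 * |β| * L) * |macroPos x - macroPos y| := by
  set d := |macroPos x - macroPos y|
  have exponent_le : |-(β / 2) * (hamC j N (exchC N η x y) - hamC j N η)| ≤ 9 * |β| * L * d := by
    rw [abs_mul, abs_neg, abs_div, abs_two]
    calc |β| / 2 * |hamC j N (exchC N η x y) - hamC j N η| ≤ |β| / 2 * (18 * L * d) := by
          gcongr
          exact abs_hamC_exchC_sub_le hj η x y
      _ = 9 * |β| * L * d := by ring
  have exponent_le_const : 9 * |β| * L * d ≤ 18 * |β| * L := by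
    calc 9 * |β| * L * d ≤ 9 * |β| * L * 2 := by gcongr; exact abs_macroPos_sub_le_two x y
      _ = 18 * |β| * L := by ring
  calc |rateC β j N x y η - 1|
      ≤ 9 * |β| * L * d * Real.exp (18 * |β| * L) := by
        refine (abs_exp_sub_one_le_mul_exp_abs _).trans ?_
        gcongr
        exact exponent_le.trans exponent_le_const
    _ = _ := by ring

end Rate

section Bernoulli

/-- The mass which the Bernoulli law of parameter `p` gives to `b`; `bernProf` is a product of
such factors. -/
def bernWeight (p : ℝ) (b : Bool) : ℝ := if b then p else 1 - p

lemma le_bernWeight {p δ : ℝ} (hp : p ∈ Icc δ (1 - δ)) (b : Bool) : δ ≤ bernWeight p b := by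
  obtain ⟨hlow, hupp⟩ := hp
  cases b
  · exact le_sub_comm.1 hupp
  · exact hlow

lemma abs_bernWeight_mul_swap_sub_le (p q : ℝ) (b c : Bool) :
    |bernWeight p c * bernWeight q b - bernWeight p b * bernWeight q c| ≤ |p - q| := by
  cases b <;> cases c <;> simp only [bernWeight, if_true, Bool.false_eq_true, if_false]
  · simp
  · exact le_of_eq (by ring_nf)
  · rw [abs_sub_comm p]
    exact le_of_eq (by ring_nf)
  · simp

variable {N : ℕ} {θ : ℝ → ℝ} {M : ℝ≥0} {δ : ℝ}

lemma bernProf_nonneg (hθ : MapsTo θ (Icc (-1) 1) (Icc 0 1)) (η : Conf N) : 0 ≤ bernProf N θ η :=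
  Finset.prod_nonneg fun x _ =>
    le_bernWeight (p := θ (macroPos x)) (by simpa using hθ (macroPos_mem_Icc x)) (η x)

lemma abs_bernProf_exchC_sub_le (hlip : LipschitzOnWith M θ (Icc (-1) 1)) (hδ : 0 < δ)
    (hθ : MapsTo θ (Icc (-1) 1) (Icc δ (1 - δ))) (η : Conf N) (x y : Site N) :
    |bernProf N θ (exchC N η x y) - bernProf N θ η| ≤
      M / δ ^ 2 * |macroPos x - macroPos y| * bernProf N θ η := by
  rw [exchC_eq_comp_swap]
  rcases eq_or_ne x y with rfl | hxy
  · simp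
  let w (z : Site N) : Bool → ℝ := bernWeight (θ (macroPos z))
  have le_w (z : Site N) (b : Bool) : δ ≤ w z b := le_bernWeight (hθ (macroPos_mem_Icc z)) b
  refine abs_prod_comp_swap_sub_le (w := w) (fun z b => hδ.le.trans (le_w z b)) hxy ?_
  calc |w x (η y) * w y (η x) - w x (η x) * w y (η y)|
      ≤ |θ (macroPos x) - θ (macroPos y)| := abs_bernWeight_mul_swap_sub_le _ _ _ _
    _ ≤ M * |macroPos x - macroPos y| :=
        hlip.dist_le_mul _ (macroPos_mem_Icc x) _ (macroPos_mem_Icc y)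
    _ = M / δ ^ 2 * |macroPos x - macroPos y| * (δ * δ) := by field_simp
    _ ≤ M / δ ^ 2 * |macroPos x - macroPos y| * (w x (η x) * w y (η y)) := by
        gcongr
        exacts [hδ.le.trans (le_w x _), le_w x _, le_w y _]

end Bernoulli

section Estimate

variable {j θ : ℝ → ℝ} {L M : ℝ≥0} {δ : ℝ}

lemma abs_two_mul_bernProf_mul_rateC_sub_le {N : ℕ} (hj : LipschitzOnWith L j (Icc (-4) 4)) (β : ℝ)
    (hlip : LipschitzOnWith M θ (Icc (-1) 1)) (hδ : 0 < δ)
    (hθ : MapsTo θ (Icc (-1) 1) (Icc δ (1 - δ))) (η : Conf N) (x y : Site N) :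
    |2 * bernProf N θ η * rateC β j N x y η - bernProf N θ η - bernProf N θ (exchC N η x y)| ≤
      (18 * |β| * L * Real.exp (18 * |β| * L) + M / δ ^ 2) * |macroPos x - macroPos y| *
        bernProf N θ η := by
  have ν_nonneg : 0 ≤ bernProf N θ η :=
    bernProf_nonneg (hθ.mono_right (Icc_subset_Icc hδ.le (by linarith))) η
  have rate := mul_le_mul_of_nonneg_left (abs_rateC_sub_one_le hj β η x y) ν_nonneg
  have weight := abs_bernProf_exchC_sub_le hlip hδ hθ η x y
  calc _ = |2 * (bernProf N θ η * (rateC β j N x y η - 1)) -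
          (bernProf N θ (exchC N η x y) - bernProf N θ η)| := by ring_nf
    _ ≤ 2 * (bernProf N θ η * |rateC β j N x y η - 1|) +
          |bernProf N θ (exchC N η x y) - bernProf N θ η| := by
        refine (abs_sub _ _).trans_eq ?_
        rw [abs_mul, abs_mul, abs_two, abs_of_nonneg ν_nonneg]
    _ ≤ _ := by linarith

lemma sum_mul_Lkaw_le {N : ℕ} {β κ : ℝ} {ν : Conf N → ℝ} (hν : ∀ η, 0 ≤ ν η)
    (hκ : ∀ x y : Site N, (y : ℤ) = x + 1 → ∀ η,
      |2 * ν η * rateC β j N x y η - ν η - ν (exchC N η x y)| ≤ κ * ν η)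
    {a : ℝ} (ha : 0 < a) (f : Conf N → ℝ) :
    ∑ η, ν η * (f η * Lkaw β j N f η) ≤
      -(1 - a) * D0 N f ν + N * κ ^ 2 / (2 * a) * ∑ η, ν η * f η ^ 2 := by
  have bond : ∀ x ∈ Finset.Icc (-(N : ℤ)) ((N : ℤ) - 1),
      2 * ∑ η, ν η * (f η * (rateC β j N x (x + 1) η * (f (exchC N η x (x + 1)) - f η))) ≤
        -(1 - a) * ∑ η, ν η * (f (exchC N η x (x + 1)) - f η) ^ 2 +
          κ ^ 2 / (4 * a) * ∑ η, ν η * f η ^ 2 := by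
    intro x hx
    obtain ⟨hlow, hupp⟩ := Finset.mem_Icc.1 hx
    let x₀ : Site N := ⟨x, Finset.mem_Icc.2 (by omega)⟩
    let x₁ : Site N := ⟨x + 1, Finset.mem_Icc.2 (by omega)⟩
    exact two_mul_sum_mul_sub_comp_involutive_le (exchC_involutive x₀ x₁) hν (hκ x₀ x₁ rfl) ha f
  have card_bonds : (Finset.Icc (-(N : ℤ)) ((N : ℤ) - 1)).card = 2 * N := by
    rw [Int.card_Icc]
    omega
  calc ∑ η, ν η * (f η * Lkaw β j N f η)
      ≤ ∑ x ∈ Finset.Icc (-(N : ℤ)) ((N : ℤ) - 1),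
          (-(1 - a) * ∑ η, ν η * (f (exchC N η x (x + 1)) - f η) ^ 2 +
            κ ^ 2 / (4 * a) * ∑ η, ν η * f η ^ 2) := by
        rw [sum_mul_Lkaw]
        exact Finset.sum_le_sum bond
    _ = -(1 - a) * D0 N f ν + N * κ ^ 2 / (2 * a) * ∑ η, ν η * f η ^ 2 := by
        rw [Finset.sum_add_distrib, ← Finset.mul_sum, Finset.sum_const, card_bonds, nsmul_eq_mul,
          D0]
        push_cast
        ring

theorem kawasaki_dirichlet_estimate_general (hj : LipschitzOnWith L j (Icc (-4) 4)) (β : ℝ)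
    (hlip : LipschitzOnWith M θ (Icc (-1) 1)) (hθ : MapsTo θ (Icc (-1) 1) (Ioo 0 1)) :
    ∃ C > 0, ∀ N : ℕ, 1 ≤ N → ∀ a > 0, ∀ f : Conf N → ℝ,
      ∑ η : Conf N, bernProf N θ η * (f η * Lkaw β j N f η) ≤
        -(1 - a) * D0 N f (bernProf N θ) +
          C / (a * N) * ∑ η : Conf N, bernProf N θ η * f η ^ 2 := by
  obtain ⟨δ, hδ, hθδ⟩ := exists_mapsTo_Icc_of_mapsTo_Ioo isCompact_Icc hlip.continuousOn hθ
  rw [zero_add] at hθδ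
  set K : ℝ := 18 * |β| * L * Real.exp (18 * |β| * L) + M / δ ^ 2
  refine ⟨K ^ 2 / 2 + 1, by positivity, fun N _ a ha f => ?_⟩
  have ν_nonneg (η : Conf N) : 0 ≤ bernProf N θ η :=
    bernProf_nonneg (hθ.mono_right Ioo_subset_Icc_self) η
  have defect (x y : Site N) (hxy : (y : ℤ) = x + 1) (η : Conf N) :
      |2 * bernProf N θ η * rateC β j N x y η - bernProf N θ η - bernProf N θ (exchC N η x y)| ≤
        K * (1 / N) * bernProf N θ η :=
    abs_macroPos_sub_of_eq_add_one hxy ▸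
      abs_two_mul_bernProf_mul_rateC_sub_le hj β hlip hδ hθδ η x y
  refine (sum_mul_Lkaw_le ν_nonneg defect ha f).trans ?_
  have norm_nonneg : 0 ≤ ∑ η, bernProf N θ η * f η ^ 2 :=
    Finset.sum_nonneg fun η _ => mul_nonneg (ν_nonneg η) (sq_nonneg _)
  refine add_le_add_right (mul_le_mul_of_nonneg_right ?_ norm_nonneg) _
  calc N * (K * (1 / N)) ^ 2 / (2 * a) = K ^ 2 / 2 / (a * N) := by field_simp
    _ ≤ (K ^ 2 / 2 + 1) / (a * N) := by gcongr; linarith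

end Estimate

/-- Dirichlet form estimate for the Kawasaki generator with respect to
a product measure with smooth profile `θ` matching the boundary densities. -/
theorem kawasaki_dirichlet_estimate
    (j : ℝ → ℝ)
    (hj_smooth : ContDiff ℝ 1 j)
    (hj_nonneg : ∀ u, 0 ≤ j u)
    (hj_even : ∀ u, j (-u) = j u)
    (hj_supp : ∀ u : ℝ, 1 < |u| → j u = 0)
    (hj_int : (∫ u : ℝ, j u) = 1)
    (β : ℝ) (hβ : 0 ≤ β)
    (ρm ρp : ℝ) (hρm : ρm ∈ Ioo (0:ℝ) 1) (hρp : ρp ∈ Ioo (0:ℝ) 1)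
    (θ : ℝ → ℝ) (hθ : ContDiff ℝ 1 θ)
    (hθ_range : ∀ u ∈ Icc (-1:ℝ) 1, θ u ∈ Ioo (0:ℝ) 1)
    (hθm : θ (-1) = ρm) (hθp : θ 1 = ρp) :
    ∃ C > 0, ∀ N : ℕ, 1 ≤ N → ∀ a > 0, ∀ f : Conf N → ℝ,
      ∑ η : Conf N, bernProf N θ η * (f η * Lkaw β j N f η) ≤
        -(1 - a) * D0 N f (bernProf N θ)
          + (C / (a * N)) * ∑ η : Conf N, bernProf N θ η * (f η)^2 := by
  obtain ⟨L, hL⟩ :=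
    hj_smooth.contDiffOn.exists_lipschitzOnWith one_ne_zero (convex_Icc (-4) 4) isCompact_Icc
  obtain ⟨M, hM⟩ :=
    hθ.contDiffOn.exists_lipschitzOnWith one_ne_zero (convex_Icc (-1) 1) isCompact_Icc
  exact kawasaki_dirichlet_estimate_general hL β hM hθ_range

end
end

section
/- Let π : [0,T] × [-1,1] → ℝ be C^1 with 0 < π(t,u) < 1 for all (t,u). Then for every smooth G : [0,T] × [-1,1] → ℝ whose support in the space variable is a compact subset of (-1,1), ∫_0^T ∫_{-1}^{1} π ∂_u G du dt - (1/2) ∫_0^T ∫_{-1}^{1} σ(π) G² du dt ≤ (1/2) ∫_0^T ∫_{-1}^{1} (∂_u π)² / σ(π) du dt; consequently Q(π) ≤ (1/2) ∫_0^T ∫_{-1}^{1} (∂_u π)² / σ(π) du dt. -/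
open MeasureTheory Set
open scoped ENNReal

noncomputable section

/-- Mobility `σ(ρ) = 2ρ(1-ρ)`. -/
def sigmaMob (ρ : ℝ) : ℝ := 2 * ρ * (1 - ρ)

/-- Admissible test functions for the energy functional: smooth functions on
`[0,T] × [-1,1]` with support, in the space variable, a compact subset of `(-1,1)`. -/
def EnergyTest (G : ℝ → ℝ → ℝ) : Prop :=
  ContDiff ℝ (⊤ : ℕ∞) (Function.uncurry G) ∧
  ∃ K : Set ℝ, IsCompact K ∧ K ⊆ Ioo (-1:ℝ) 1 ∧ ∀ t u, u ∉ K → G t u = 0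

/-- The energy functional
`Q(π) = sup_G { ∫∫ π ∂_u G - (1/2) ∫∫ σ(π) G² }`, valued in `[0,+∞]`. -/
def Qen (T : ℝ) (π : ℝ → ℝ → ℝ) : ℝ≥0∞ :=
  ⨆ (G : ℝ → ℝ → ℝ) (_ : EnergyTest G),
    ENNReal.ofReal
      ((∫ t in (0:ℝ)..T, ∫ u in (-1:ℝ)..1, π t u * deriv (fun w => G t w) u) -
        (1/2) * ∫ t in (0:ℝ)..T, ∫ u in (-1:ℝ)..1, sigmaMob (π t u) * (G t u)^2)

/-!
Since `G` vanishes at the endpoints, integration by parts in `u` turns `∫ π ∂_u G` into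
`-∫ (∂_u π) G`. Completing the square,
`-(d g) - s g² / 2 = d² / (2 s) - (d + s g)² / (2 s) ≤ d² / (2 s)` with `d = ∂_u π`, `g = G` and
`s = σ(π) > 0`, and integrating over `u` and then over `t` bounds the functional at every `G`,
hence also its supremum.
-/

theorem neg_mul_sub_half_mul_sq_le {k : Type*} [Field k] [LinearOrder k] [IsStrictOrderedRing k]
    {s : k} (hs : 0 < s) (d g : k) :
    -(d * g) - 1 / 2 * (s * g ^ 2) ≤ 1 / 2 * (d ^ 2 / s) := by
  have complete_square :
      1 / 2 * (d ^ 2 / s) - (-(d * g) - 1 / 2 * (s * g ^ 2)) = (d + s * g) ^ 2 / (2 * s) := by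
    field_simp
    ring
  have square_nonneg : 0 ≤ (d + s * g) ^ 2 / (2 * s) := by positivity
  linarith

theorem integral_sub_mul_integral_le_mul_integral {μ : Measure ℝ} {a b : ℝ} {f g h : ℝ → ℝ}
    (hab : a ≤ b) (hf : IntervalIntegrable f μ a b) (hg : IntervalIntegrable g μ a b)
    (hh : IntervalIntegrable h μ a b) (c d : ℝ)
    (hle : ∀ x ∈ Icc a b, f x - c * g x ≤ d * h x) :
    (∫ x in a..b, f x ∂μ) - c * (∫ x in a..b, g x ∂μ) ≤ d * ∫ x in a..b, h x ∂μ := by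
  rw [← intervalIntegral.integral_const_mul, ← intervalIntegral.integral_const_mul,
    ← intervalIntegral.integral_sub hf (hg.const_mul c)]
  exact intervalIntegral.integral_mono_on hab (hf.sub (hg.const_mul c)) (hh.const_mul d) hle

theorem intervalIntegrable_integral_of_continuousOn_prod {E : Type*} [NormedAddCommGroup E]
    [NormedSpace ℝ E] {μ ν : Measure ℝ} [IsLocallyFiniteMeasure μ] [IsLocallyFiniteMeasure ν]
    {a b c d : ℝ} {F : ℝ × ℝ → E} (hF : ContinuousOn F (uIcc a b ×ˢ uIcc c d)) :
    IntervalIntegrable (fun t => ∫ u in c..d, F (t, u) ∂ν) μ a b := by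
  have integrableOn_prod : IntegrableOn F (uIoc a b ×ˢ uIoc c d) (μ.prod ν) :=
    (hF.integrableOn_compact (isCompact_uIcc.prod isCompact_uIcc)).mono_set
      (prod_mono uIoc_subset_uIcc uIoc_subset_uIcc)
  rw [IntegrableOn, ← Measure.prod_restrict] at integrableOn_prod
  simp only [intervalIntegrable_iff, intervalIntegral.intervalIntegral_eq_integral_uIoc]
  exact integrableOn_prod.integral_prod_left.smul _

section PartialDerivative

variable {𝕜 E F : Type*} [NontriviallyNormedField 𝕜] [NormedAddCommGroup E] [NormedSpace 𝕜 E]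
  [NormedAddCommGroup F] [NormedSpace 𝕜 F] {f : E → 𝕜 → F}

theorem hasDerivAt_deriv_of_contDiff_uncurry (hf : ContDiff 𝕜 1 (Function.uncurry f))
    (t : E) (u : 𝕜) : HasDerivAt (f t) (deriv (f t) u) u :=
  ((hf.comp (contDiff_prodMk_right t)).differentiable one_ne_zero u).hasDerivAt

theorem continuous_uncurry_deriv_of_contDiff_uncurry (hf : ContDiff 𝕜 1 (Function.uncurry f)) :
    Continuous (Function.uncurry fun t u => deriv (f t) u) := by
  have contDiff_slices : ContDiff 𝕜 1 (Function.uncurry fun (p : E × 𝕜) (w : 𝕜) => f p.1 w) :=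
    hf.comp (contDiff_fst.fst.prodMk contDiff_snd)
  exact (contDiff_slices.fderiv_apply contDiff_snd contDiff_const (zero_add 1).le).continuous

end PartialDerivative

theorem integral_mul_deriv_eq_neg_integral_deriv_mul {A : Type*} [NormedRing A]
    [NormedAlgebra ℝ A] [CompleteSpace A] {a b : ℝ} {f f' g g' : ℝ → A}
    (hf : ContinuousOn f (uIcc a b)) (hg : ContinuousOn g (uIcc a b))
    (hff' : ∀ u ∈ Ioo (min a b) (max a b), HasDerivAt f (f' u) u)
    (hgg' : ∀ u ∈ Ioo (min a b) (max a b), HasDerivAt g (g' u) u)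
    (hf' : IntervalIntegrable f' volume a b) (hg' : IntervalIntegrable g' volume a b)
    (hga : g a = 0) (hgb : g b = 0) :
    ∫ u in a..b, f u * g' u = -∫ u in a..b, f' u * g u := by
  rw [intervalIntegral.integral_mul_deriv_eq_deriv_mul_of_hasDerivAt hf hg hff' hgg' hf' hg',
    hga, hgb, mul_zero, mul_zero, sub_zero, zero_sub]

theorem integral_mul_deriv_sub_half_integral_mul_sq_le {a b : ℝ} {f f' g g' s : ℝ → ℝ}
    (hab : a ≤ b) (hf : ContinuousOn f (Icc a b)) (hf' : ContinuousOn f' (Icc a b))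
    (hff' : ∀ u ∈ Ioo a b, HasDerivAt f (f' u) u)
    (hg : ContinuousOn g (Icc a b)) (hg' : IntervalIntegrable g' volume a b)
    (hgg' : ∀ u ∈ Ioo a b, HasDerivAt g (g' u) u) (hga : g a = 0) (hgb : g b = 0)
    (hs : ContinuousOn s (Icc a b)) (hs_pos : ∀ u ∈ Icc a b, 0 < s u) :
    (∫ u in a..b, f u * g' u) - 1 / 2 * (∫ u in a..b, s u * g u ^ 2) ≤
      1 / 2 * ∫ u in a..b, f' u ^ 2 / s u := by
  have by_parts : ∫ u in a..b, f u * g' u = ∫ u in a..b, -(f' u * g u) := by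
    rw [intervalIntegral.integral_neg]
    exact integral_mul_deriv_eq_neg_integral_deriv_mul (by rwa [uIcc_of_le hab])
      (by rwa [uIcc_of_le hab]) (by rwa [min_eq_left hab, max_eq_right hab])
      (by rwa [min_eq_left hab, max_eq_right hab]) (hf'.intervalIntegrable_of_Icc hab) hg' hga hgb
  rw [by_parts]
  exact integral_sub_mul_integral_le_mul_integral hab
    ((hf'.mul hg).neg.intervalIntegrable_of_Icc hab)
    ((hs.mul (hg.pow 2)).intervalIntegrable_of_Icc hab)
    (((hf'.pow 2).div hs fun u hu => (hs_pos u hu).ne').intervalIntegrable_of_Icc hab) _ _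
    fun u hu => neg_mul_sub_half_mul_sq_le (hs_pos u hu) (f' u) (g u)

theorem integral_integral_mul_deriv_sub_half_integral_integral_mul_sq_le {a b c d : ℝ}
    {f f' g g' s : ℝ → ℝ → ℝ} (hab : a ≤ b) (hcd : c ≤ d)
    (hf : ContinuousOn (Function.uncurry f) (Icc a b ×ˢ Icc c d))
    (hf' : ContinuousOn (Function.uncurry f') (Icc a b ×ˢ Icc c d))
    (hff' : ∀ t ∈ Icc a b, ∀ u ∈ Ioo c d, HasDerivAt (f t) (f' t u) u)
    (hg : ContinuousOn (Function.uncurry g) (Icc a b ×ˢ Icc c d))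
    (hg' : ContinuousOn (Function.uncurry g') (Icc a b ×ˢ Icc c d))
    (hgg' : ∀ t ∈ Icc a b, ∀ u ∈ Ioo c d, HasDerivAt (g t) (g' t u) u)
    (hgc : ∀ t ∈ Icc a b, g t c = 0) (hgd : ∀ t ∈ Icc a b, g t d = 0)
    (hs : ContinuousOn (Function.uncurry s) (Icc a b ×ˢ Icc c d))
    (hs_pos : ∀ t ∈ Icc a b, ∀ u ∈ Icc c d, 0 < s t u) :
    (∫ t in a..b, ∫ u in c..d, f t u * g' t u) -
        1 / 2 * (∫ t in a..b, ∫ u in c..d, s t u * g t u ^ 2) ≤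
      1 / 2 * ∫ t in a..b, ∫ u in c..d, f' t u ^ 2 / s t u := by
  have integrable_inner {F : ℝ × ℝ → ℝ} (hF : ContinuousOn F (Icc a b ×ˢ Icc c d)) :
      IntervalIntegrable (fun t => ∫ u in c..d, F (t, u)) volume a b :=
    intervalIntegrable_integral_of_continuousOn_prod (by rwa [uIcc_of_le hab, uIcc_of_le hcd])
  refine integral_sub_mul_integral_le_mul_integral hab (integrable_inner (hf.mul hg'))
    (integrable_inner (hs.mul (hg.pow 2)))
    (integrable_inner ((hf'.pow 2).div hs fun p hp => (hs_pos p.1 hp.1 p.2 hp.2).ne')) _ _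
    fun t ht => ?_
  exact integral_mul_deriv_sub_half_integral_mul_sq_le hcd (hf.uncurry_left t ht)
    (hf'.uncurry_left t ht) (hff' t ht) (hg.uncurry_left t ht)
    ((hg'.uncurry_left t ht).intervalIntegrable_of_Icc hcd) (hgg' t ht) (hgc t ht) (hgd t ht)
    (hs.uncurry_left t ht) (hs_pos t ht)

theorem continuous_sigmaMob : Continuous sigmaMob := by
  unfold sigmaMob
  fun_prop

theorem sigmaMob_pos {ρ : ℝ} (hρ : ρ ∈ Ioo (0 : ℝ) 1) : 0 < sigmaMob ρ :=
  mul_pos (mul_pos two_pos hρ.1) (sub_pos.2 hρ.2)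

theorem EnergyTest.contDiff_one {G : ℝ → ℝ → ℝ} (hG : EnergyTest G) :
    ContDiff ℝ 1 (Function.uncurry G) :=
  hG.1.of_le (mod_cast le_top)

theorem EnergyTest.eq_zero_of_notMem_Ioo {G : ℝ → ℝ → ℝ} (hG : EnergyTest G) (t : ℝ) {u : ℝ}
    (hu : u ∉ Ioo (-1 : ℝ) 1) : G t u = 0 := by
  obtain ⟨-, K, -, hK, hG_zero⟩ := hG
  exact hG_zero t u fun huK => hu (hK huK)

theorem energy_upper_bound_general {T : ℝ} (hT : 0 ≤ T) {π π' : ℝ → ℝ → ℝ}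
    (hπ : ContinuousOn (Function.uncurry π) (Icc 0 T ×ˢ Icc (-1) 1))
    (hπ' : ContinuousOn (Function.uncurry π') (Icc 0 T ×ˢ Icc (-1) 1))
    (hππ' : ∀ t ∈ Icc 0 T, ∀ u ∈ Ioo (-1) 1, HasDerivAt (π t) (π' t u) u)
    (hπ_range : ∀ t ∈ Icc 0 T, ∀ u ∈ Icc (-1) 1, π t u ∈ Ioo (0 : ℝ) 1) :
    (∀ G : ℝ → ℝ → ℝ, EnergyTest G →
      (∫ t in 0..T, ∫ u in (-1)..1, π t u * deriv (fun w => G t w) u) -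
          1 / 2 * (∫ t in 0..T, ∫ u in (-1)..1, sigmaMob (π t u) * G t u ^ 2) ≤
        1 / 2 * ∫ t in 0..T, ∫ u in (-1)..1, π' t u ^ 2 / sigmaMob (π t u)) ∧
    Qen T π ≤
      ENNReal.ofReal (1 / 2 * ∫ t in 0..T, ∫ u in (-1)..1, π' t u ^ 2 / sigmaMob (π t u)) := by
  have bound_at (G : ℝ → ℝ → ℝ) (hG : EnergyTest G) :=
    integral_integral_mul_deriv_sub_half_integral_integral_mul_sq_le
      (s := fun t u => sigmaMob (π t u)) hT (by norm_num) hπ hπ' hππ'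
      hG.contDiff_one.continuous.continuousOn
      (continuous_uncurry_deriv_of_contDiff_uncurry hG.contDiff_one).continuousOn
      (fun t _ u _ => hasDerivAt_deriv_of_contDiff_uncurry hG.contDiff_one t u)
      (fun t _ => hG.eq_zero_of_notMem_Ioo t left_notMem_Ioo)
      (fun t _ => hG.eq_zero_of_notMem_Ioo t right_notMem_Ioo)
      (continuous_sigmaMob.comp_continuousOn hπ)
      (fun t ht u hu => sigmaMob_pos (hπ_range t ht u hu))
  exact ⟨bound_at, iSup₂_le fun G hG => ENNReal.ofReal_le_ofReal (bound_at G hG)⟩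

/-- for a `C¹` density `π` with `0 < π < 1`, the energy functional is
bounded by `(1/2) ∫∫ (∂_u π)² / σ(π)`. -/
theorem energy_upper_bound
    (T : ℝ) (hT : 0 < T)
    (π : ℝ → ℝ → ℝ)
    (hπ : ContDiff ℝ 1 (Function.uncurry π))
    (hπ_range : ∀ t ∈ Icc (0:ℝ) T, ∀ u ∈ Icc (-1:ℝ) 1, π t u ∈ Ioo (0:ℝ) 1) :
    (∀ G : ℝ → ℝ → ℝ, EnergyTest G →
      (∫ t in (0:ℝ)..T, ∫ u in (-1:ℝ)..1, π t u * deriv (fun w => G t w) u) -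
          (1/2) * (∫ t in (0:ℝ)..T, ∫ u in (-1:ℝ)..1, sigmaMob (π t u) * (G t u)^2) ≤
        (1/2) * ∫ t in (0:ℝ)..T, ∫ u in (-1:ℝ)..1,
          (deriv (fun w => π t w) u)^2 / sigmaMob (π t u)) ∧
    Qen T π ≤
      ENNReal.ofReal ((1/2) * ∫ t in (0:ℝ)..T, ∫ u in (-1:ℝ)..1,
        (deriv (fun w => π t w) u)^2 / sigmaMob (π t u)) := by
  exact energy_upper_bound_general hT.le hπ.continuous.continuousOn
    (continuous_uncurry_deriv_of_contDiff_uncurry hπ).continuousOn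
    (fun t _ u _ => hasDerivAt_deriv_of_contDiff_uncurry hπ t u) hπ_range

end
end
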